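/- arXiv:2012.11748 — 2 statements merged into one kernel-verified Lean document; each statement's English description precedes it below -/
import Mathlib

section
/- Let p, q, μ be unit vectors in ℝ³ (EuclideanSpace ℝ (Fin 3)) with q ≠ p, q ≠ -p, ⟪μ, p⟫ = 0, and q lying in the plane spanned by p and μ (i.e., q = ⟪p, q⟫ • p + ⟪μ, q⟫ • μ). Then ⟪Log p q, μ⟫ = sign(⟪μ, q⟫) · arccos ⟪p, q⟫, where sign denotes the real sign function. (This is equation (5) of the paper, expressing the projection of the logarithmic map onto the co-normal as a signed geodesic distance between neighboring normal vectors.) -/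
open scoped RealInnerProductSpace

noncomputable def sphereLog (p q : EuclideanSpace ℝ (Fin 3)) : EuclideanSpace ℝ (Fin 3) :=
  (Real.arccos ⟪p, q⟫ / ‖q - ⟪p, q⟫ • p‖) • (q - ⟪p, q⟫ • p)

/-! The logarithm of `q` at `p` is the angle `arccos ⟪p, q⟫` times the direction of the component of
`q` orthogonal to `p`. In the plane of `p` and `μ` that component is `⟪μ, q⟫ • μ`, so the direction
is `μ` up to the sign of `⟪μ, q⟫`. -/

theorem real_sign_eq_coe_signType_sign (t : ℝ) : Real.sign t = (SignType.sign t : ℝ) := by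
  rcases lt_trichotomy t 0 with ht | rfl | ht
  · simp [Real.sign_of_neg ht, sign_neg ht]
  · simp
  · simp [Real.sign_of_pos ht, sign_pos ht]

section InnerProductSpace

variable {V : Type*} [NormedAddCommGroup V] [InnerProductSpace ℝ V]

theorem real_inner_normalize_smul_self {e : V} (he : ‖e‖ = 1) (t : ℝ) :
    ⟪NormedSpace.normalize (t • e), e⟫ = Real.sign t := by
  rw [NormedSpace.normalize_smul, NormedSpace.normalize_eq_self_of_norm_eq_one he,
    real_inner_smul_left, real_inner_self_eq_norm_sq, he, one_pow, mul_one,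
    real_sign_eq_coe_signType_sign]

/-- The logarithmic map of the unit sphere of a real inner product space, with values in the ambient
space. At the antipode `q = -p`, where there is no logarithm, it takes the junk value `0`. -/
noncomputable def unitSphereLog (p q : Metric.sphere (0 : V) 1) : V :=
  Real.arccos ⟪(p : V), q⟫ • NormedSpace.normalize ((q : V) - ⟪(p : V), q⟫ • (p : V))

theorem inner_sphereLog_conormal_eq_signed_angle_general {p q : Metric.sphere (0 : V) 1} {μ : V}
    (hμ : ‖μ‖ = 1) (_hqp : q ≠ -p)
    (hplane : (q : V) = ⟪(p : V), q⟫ • (p : V) + ⟪μ, q⟫ • μ) :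
    ⟪unitSphereLog p q, μ⟫ = Real.sign ⟪μ, q⟫ * Real.arccos ⟪(p : V), q⟫ := by
  have htangent : (q : V) - ⟪(p : V), q⟫ • (p : V) = ⟪μ, q⟫ • μ := sub_eq_of_eq_add' hplane
  rw [unitSphereLog, htangent, real_inner_smul_left, real_inner_normalize_smul_self hμ, mul_comm]

end InnerProductSpace

theorem sphereLog_eq_unitSphereLog (p q : Metric.sphere (0 : EuclideanSpace ℝ (Fin 3)) 1) :
    sphereLog p q = unitSphereLog p q := by
  rw [sphereLog, unitSphereLog, NormedSpace.normalize, smul_smul, div_eq_mul_inv]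

theorem inner_sphereLog_conormal_eq_signed_angle (p q μ : EuclideanSpace ℝ (Fin 3))
    (hp : ‖p‖ = 1) (hq : ‖q‖ = 1) (hμ : ‖μ‖ = 1)
    (hqp : q ≠ p) (hqp' : q ≠ -p)
    (hμp : ⟪μ, p⟫ = 0)
    (hplane : q = ⟪p, q⟫ • p + ⟪μ, q⟫ • μ) :
    ⟪sphereLog p q, μ⟫ = Real.sign ⟪μ, q⟫ * Real.arccos ⟪p, q⟫ := by
  lift p to Metric.sphere (0 : EuclideanSpace ℝ (Fin 3)) 1 using mem_sphere_zero_iff_norm.2 hp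
  lift q to Metric.sphere (0 : EuclideanSpace ℝ (Fin 3)) 1 using mem_sphere_zero_iff_norm.2 hq
  rw [sphereLog_eq_unitSphereLog]
  exact inner_sphereLog_conormal_eq_signed_angle_general hμ (ne_of_apply_ne Subtype.val hqp') hplane
end

section
/- Let p, q, μ be unit vectors in ℝ³ (EuclideanSpace ℝ (Fin 3)) with -1 < ⟪p, q⟫ < 1, ⟪μ, p⟫ = 0, and q lying in the plane spanned by p and μ (i.e., q = ⟪p, q⟫ • p + ⟪μ, q⟫ • μ). Then sign(⟪μ, q⟫) • gradient (fun x => arccos(⟪x, q⟫ / ‖x‖)) p = -μ. (This is the first identity of equation (9) of the paper: the derivative of the signed angle sign(μ⁺·n⁻) arccos(n⁺·n⁻) with respect to the normal n⁺ equals minus the co-normal μ⁺.) -/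
/-!
The cosine of the angle `θ` between `x` and `q` is `⟪x, q⟫ / (‖x‖ * ‖q‖)`, whose gradient at unit
vectors is `q - cos θ • x`, the component of `q` orthogonal to `x`. Composing with `arccos`, the
angle has gradient `-(sin θ)⁻¹ • (q - cos θ • x)`. Coplanarity identifies `q - cos θ • p` with
`⟪μ, q⟫ • μ`, and forces `sin θ = |⟪μ, q⟫|`, so only the sign of `⟪μ, q⟫` survives.
-/

open scoped RealInnerProductSpace

open InnerProductGeometry

section

variable {E : Type*} [NormedAddCommGroup E] [InnerProductSpace ℝ E]

lemma hasFDerivAt_norm {p : E} (hp : p ≠ 0) :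
    HasFDerivAt (fun x : E => ‖x‖) (innerSL ℝ (‖p‖⁻¹ • p)) p := by
  have hsqrt := ((hasFDerivAt_id (𝕜 := ℝ) p).norm_sq).sqrt (by simpa using hp)
  simp only [id, Real.sqrt_sq (norm_nonneg _)] at hsqrt
  refine hsqrt.congr_fderiv ?_
  ext v
  simp only [one_div, mul_inv_rev, ContinuousLinearMap.comp_id, smul_apply, coe_innerSL_apply,
    nsmul_eq_mul, Nat.cast_ofNat, smul_eq_mul, map_smul]
  ring

lemma hasFDerivAt_cos_angle {p : E} (hp : p ≠ 0) (q : E) :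
    HasFDerivAt (fun x => Real.cos (angle x q))
      (innerSL ℝ (‖p‖⁻¹ • (‖q‖⁻¹ • q - (Real.cos (angle p q) / ‖p‖) • p))) p := by
  have hinner : HasFDerivAt (fun x => ⟪‖q‖⁻¹ • q, x⟫) (innerSL ℝ (‖q‖⁻¹ • q)) p :=
    (innerSL ℝ (‖q‖⁻¹ • q)).hasFDerivAt
  have hinv := (hasDerivAt_inv (norm_ne_zero_iff.mpr hp)).comp_hasFDerivAt p (hasFDerivAt_norm hp)
  have hcos : (fun x => Real.cos (angle x q)) = fun x => ⟪‖q‖⁻¹ • q, x⟫ * ‖x‖⁻¹ := by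
    funext x
    rw [cos_angle, real_inner_smul_left, real_inner_comm]
    ring
  rw [cos_angle, hcos]
  refine (hinner.fun_mul hinv).congr_fderiv ?_
  ext v
  simp only [real_inner_smul_left, real_inner_comm p q, map_smul, neg_smul, smul_neg,
    Function.comp_apply, add_apply, neg_apply, smul_apply, coe_innerSL_apply, smul_eq_mul, map_sub,
    sub_apply]
  ring

lemma sin_angle_eq_sqrt_one_sub_cos_sq (p q : E) :
    Real.sin (angle p q) = √(1 - Real.cos (angle p q) ^ 2) :=
  Real.sin_eq_sqrt_one_sub_cos_sq (angle_nonneg p q) (angle_le_pi p q)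

lemma hasFDerivAt_angle {p q : E} (hp : p ≠ 0) (hpq : Real.sin (angle p q) ≠ 0) :
    HasFDerivAt (fun x => angle x q)
      (innerSL ℝ (-(‖p‖ * Real.sin (angle p q))⁻¹ •
        (‖q‖⁻¹ • q - (Real.cos (angle p q) / ‖p‖) • p))) p := by
  have hcos_sq : Real.cos (angle p q) ^ 2 ≠ 1 := fun h =>
    hpq (by simpa [h] using Real.sin_sq_add_cos_sq (angle p q))
  have hne : Real.cos (angle p q) ≠ -1 ∧ Real.cos (angle p q) ≠ 1 := by
    constructor <;> intro h <;> simp [h] at hcos_sq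
  have harccos := (Real.hasDerivAt_arccos hne.1 hne.2).comp_hasFDerivAt p
    (hasFDerivAt_cos_angle hp q)
  have hangle : (fun x => angle x q) = Real.arccos ∘ fun x => Real.cos (angle x q) := by
    funext x
    exact (Real.arccos_cos (angle_nonneg x q) (angle_le_pi x q)).symm
  rw [hangle]
  refine harccos.congr_fderiv ?_
  rw [← sin_angle_eq_sqrt_one_sub_cos_sq, ← map_smul, smul_smul]
  congr 2
  simp [mul_comm]

lemma inner_sq_add_inner_sq_of_eq_smul_add_smul {p q μ : E}
    (hplane : q = ⟪p, q⟫ • p + ⟪μ, q⟫ • μ) : ⟪p, q⟫ ^ 2 + ⟪μ, q⟫ ^ 2 = ‖q‖ ^ 2 := by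
  have h := congrArg (fun x => ⟪x, q⟫) hplane
  simp only [inner_add_left, real_inner_smul_left, real_inner_self_eq_norm_sq] at h
  linarith

lemma sin_angle_eq_abs_inner_of_eq_smul_add_smul {p q μ : E} (hp : ‖p‖ = 1) (hq : ‖q‖ = 1)
    (hplane : q = ⟪p, q⟫ • p + ⟪μ, q⟫ • μ) : Real.sin (angle p q) = |⟪μ, q⟫| := by
  have hsq : 1 - ⟪p, q⟫ ^ 2 = ⟪μ, q⟫ ^ 2 := by
    rw [sub_eq_iff_eq_add', inner_sq_add_inner_sq_of_eq_smul_add_smul hplane, hq, one_pow]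
  rw [sin_angle_eq_sqrt_one_sub_cos_sq, ← inner_eq_cos_angle_of_norm_eq_one hp hq, hsq,
    Real.sqrt_sq_eq_abs]

end

lemma real_sign_mul_self (r : ℝ) : Real.sign r * r = |r| := by
  rcases lt_trichotomy r 0 with h | rfl | h
  · rw [Real.sign_of_neg h, abs_of_neg h, neg_one_mul]
  · simp
  · rw [Real.sign_of_pos h, abs_of_pos h, one_mul]

theorem gradient_signed_angle_wrt_first_normal_general {E : Type*} [NormedAddCommGroup E]
    [InnerProductSpace ℝ E] [CompleteSpace E] (p q μ : E) (hp : ‖p‖ = 1) (hq : ‖q‖ = 1)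
    (h₁ : -1 < ⟪p, q⟫) (h₂ : ⟪p, q⟫ < 1) (hplane : q = ⟪p, q⟫ • p + ⟪μ, q⟫ • μ) :
    Real.sign ⟪μ, q⟫ • gradient (fun x : E => Real.arccos (⟪x, q⟫ / ‖x‖)) p = -μ := by
  have hcos : Real.cos (angle p q) = ⟪p, q⟫ := (inner_eq_cos_angle_of_norm_eq_one hp hq).symm
  have hsin : Real.sin (angle p q) = |⟪μ, q⟫| :=
    sin_angle_eq_abs_inner_of_eq_smul_add_smul hp hq hplane
  have hsin_ne : |⟪μ, q⟫| ≠ 0 := by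
    intro hs
    have hsq := inner_sq_add_inner_sq_of_eq_smul_add_smul hplane
    rw [abs_eq_zero.mp hs, hq] at hsq
    linarith [(sq_lt_one_iff_abs_lt_one ⟪p, q⟫).mpr (abs_lt.mpr ⟨h₁, h₂⟩)]
  have hangle : (fun x : E => Real.arccos (⟪x, q⟫ / ‖x‖)) = fun x => angle x q := by
    simp only [angle, hq, mul_one]
  have hgrad : HasGradientAt (fun x => angle x q) (-|⟪μ, q⟫|⁻¹ • ⟪μ, q⟫ • μ) p := by
    have h := hasFDerivAt_angle (norm_ne_zero_iff.mp (by simp [hp])) (hsin ▸ hsin_ne)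
    rwa [hcos, hsin, hp, hq, one_mul, div_one, inv_one, one_smul,
      sub_eq_iff_eq_add'.mpr hplane] at h
  rw [hangle, hgrad.gradient, smul_smul, smul_smul, mul_right_comm, real_sign_mul_self, mul_neg,
    mul_inv_cancel₀ hsin_ne, neg_one_smul]

theorem gradient_signed_angle_wrt_first_normal (p q μ : EuclideanSpace ℝ (Fin 3))
    (hp : ‖p‖ = 1) (hq : ‖q‖ = 1) (hμ : ‖μ‖ = 1)
    (h₁ : -1 < ⟪p, q⟫) (h₂ : ⟪p, q⟫ < 1)
    (hμp : ⟪μ, p⟫ = 0)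
    (hplane : q = ⟪p, q⟫ • p + ⟪μ, q⟫ • μ) :
    Real.sign ⟪μ, q⟫ •
        gradient (fun x : EuclideanSpace ℝ (Fin 3) => Real.arccos (⟪x, q⟫ / ‖x‖)) p = -μ :=
  gradient_signed_angle_wrt_first_normal_general p q μ hp hq h₁ h₂ hplane
end
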